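/- Let W = Δ_A × Δ_B ⊂ ℝ^K (K = A + B) and let F(μ,ν) = (Aν, 1 − Aᵀμ) with matrix entries in [0,1]. For every w ∈ W with positive coordinates and all w¹, w² ∈ W, ‖F(w¹) − F(w²)‖_{⋆,w} ≤ √K · ‖w¹ − w²‖_w, where ‖x‖_w² = Σᵢ xᵢ²/wᵢ² and ‖x‖_{⋆,w}² = Σᵢ wᵢ² xᵢ². -/

import Mathlib

open Finset

/-!
The map `F` is affine with linear part `(x, y) ↦ (A y, -Aᵀ x)`. In the coordinates rescaled by `w`
its two blocks become `D₁ A D₂` and `-D₂ Aᵀ D₁`, where `D₁` and `D₂` are the diagonal matrices of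
the two components of `w`. By Cauchy–Schwarz the operator norm of either block is at most its
Frobenius norm. The two Frobenius norms agree, and since the blocks act on complementary
coordinates, this common value is a Lipschitz constant of `F`. On the simplices it is at most
`1 ≤ √(m + n)`.
-/

section

open scoped Matrix

variable {ι κ : Type*} [Fintype ι] [Fintype κ]

theorem nonempty_of_mem_stdSimplex {R : Type*} [Semiring R] [PartialOrder R] [Nontrivial R]
    {p : ι → R} (hp : p ∈ stdSimplex R ι) : Nonempty ι := by
  by_contra! hι
  simp only [stdSimplex_of_isEmpty_index, Set.mem_empty_iff_false] at hp

variable {R : Type*} [CommRing R] [LinearOrder R] [IsStrictOrderedRing R]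

theorem sum_mulVec_sq_le (M : Matrix ι κ R) (x : κ → R) :
    ∑ i, (M *ᵥ x) i ^ 2 ≤ (∑ i, ∑ j, M i j ^ 2) * ∑ j, x j ^ 2 := by
  rw [sum_mul]
  exact sum_le_sum fun i _ => sum_mul_sq_le_sq_mul_sq univ (M i) x

theorem sum_sum_sq_mul_mul_le_of_abs_le {A : Matrix ι κ R} {c : R} (hA : ∀ i j, |A i j| ≤ c)
    (p : ι → R) (q : κ → R) :
    ∑ i, ∑ j, (p i * A i j * q j) ^ 2 ≤ c ^ 2 * ((∑ i, p i ^ 2) * ∑ j, q j ^ 2) := by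
  rw [sum_mul_sum]
  simp only [mul_sum]
  refine sum_le_sum fun i _ => sum_le_sum fun j _ => ?_
  calc (p i * A i j * q j) ^ 2 = A i j ^ 2 * (p i ^ 2 * q j ^ 2) := by ring
    _ ≤ c ^ 2 * (p i ^ 2 * q j ^ 2) := by
      gcongr ?_ * _
      exact sq_le_sq' (abs_le.1 (hA i j)).1 (abs_le.1 (hA i j)).2

theorem sum_sq_le_one_of_mem_stdSimplex {p : ι → R} (hp : p ∈ stdSimplex R ι) :
    ∑ i, p i ^ 2 ≤ 1 := by
  simpa only [hp.2, one_pow] using sum_sq_le_sq_sum_of_nonneg fun i (_ : i ∈ univ) => hp.1 i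

theorem sum_sum_sq_mul_mul_le_one_of_mem_stdSimplex {A : Matrix ι κ R} (hA : ∀ i j, |A i j| ≤ 1)
    {p : ι → R} (hp : p ∈ stdSimplex R ι) {q : κ → R} (hq : q ∈ stdSimplex R κ) :
    ∑ i, ∑ j, (p i * A i j * q j) ^ 2 ≤ 1 :=
  calc ∑ i, ∑ j, (p i * A i j * q j) ^ 2
    _ ≤ 1 ^ 2 * ((∑ i, p i ^ 2) * ∑ j, q j ^ 2) := sum_sum_sq_mul_mul_le_of_abs_le hA p q
    _ = (∑ i, p i ^ 2) * ∑ j, q j ^ 2 := by rw [one_pow, one_mul]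
    _ ≤ 1 := mul_le_one₀ (sum_sq_le_one_of_mem_stdSimplex hp)
      (sum_nonneg fun j _ => sq_nonneg (q j)) (sum_sq_le_one_of_mem_stdSimplex hq)

theorem sum_sq_mul_mulVec_sq_le {K : Type*} [Field K] [LinearOrder K] [IsStrictOrderedRing K]
    (A : Matrix ι κ K) (p : ι → K) {q : κ → K} (hq : ∀ j, q j ≠ 0) (x : κ → K) :
    ∑ i, p i ^ 2 * (A *ᵥ x) i ^ 2 ≤
      (∑ i, ∑ j, (p i * A i j * q j) ^ 2) * ∑ j, x j ^ 2 / q j ^ 2 := by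
  have rescaled_mulVec (i : ι) :
      (Matrix.of (fun i j => p i * A i j * q j) *ᵥ fun j => x j / q j) i = p i * (A *ᵥ x) i := by
    simp only [Matrix.mulVec, dotProduct, Matrix.of_apply, mul_sum]
    refine sum_congr rfl fun j _ => ?_
    rw [mul_assoc (p i * A i j), mul_div_cancel₀ _ (hq j), mul_assoc]
  simpa only [rescaled_mulVec, Matrix.of_apply, mul_pow, div_pow] using
    sum_mulVec_sq_le (Matrix.of fun i j => p i * A i j * q j) fun j => x j / q j

theorem stmt_10_general (A : Matrix ι κ ℝ)
    (F₁ : (ι → ℝ) × (κ → ℝ) → ι → ℝ) (F₂ : (ι → ℝ) × (κ → ℝ) → κ → ℝ)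
    (hF₁ : ∀ w i, F₁ w i = ∑ j, A i j * w.2 j)
    (hF₂ : ∀ w j, F₂ w j = 1 - ∑ i, A i j * w.1 i)
    (w : (ι → ℝ) × (κ → ℝ)) (hw : (∀ i, w.1 i ≠ 0) ∧ (∀ j, w.2 j ≠ 0))
    (w₁ w₂ : (ι → ℝ) × (κ → ℝ)) :
    Real.sqrt ((∑ i, (w.1 i) ^ 2 * (F₁ w₁ i - F₁ w₂ i) ^ 2) +
        ∑ j, (w.2 j) ^ 2 * (F₂ w₁ j - F₂ w₂ j) ^ 2)
      ≤ Real.sqrt (∑ i, ∑ j, (w.1 i * A i j * w.2 j) ^ 2) *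
        Real.sqrt ((∑ i, (w₁.1 i - w₂.1 i) ^ 2 / (w.1 i) ^ 2) +
          ∑ j, (w₁.2 j - w₂.2 j) ^ 2 / (w.2 j) ^ 2) := by
  have F₁_sub (i : ι) : F₁ w₁ i - F₁ w₂ i = (A *ᵥ (w₁.2 - w₂.2)) i := by
    rw [Matrix.mulVec_sub, Pi.sub_apply, hF₁, hF₁]
    rfl
  have F₂_sub (j : κ) : F₂ w₁ j - F₂ w₂ j = -(Aᵀ *ᵥ (w₁.1 - w₂.1)) j := by
    rw [Matrix.mulVec_sub, Pi.sub_apply, hF₂, hF₂, sub_sub_sub_cancel_left, neg_sub]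
    rfl
  have frobenius_transpose : ∑ j, ∑ i, (w.2 j * Aᵀ j i * w.1 i) ^ 2 =
      ∑ i, ∑ j, (w.1 i * A i j * w.2 j) ^ 2 := by
    rw [sum_comm]
    refine sum_congr rfl fun i _ => sum_congr rfl fun j _ => ?_
    rw [Matrix.transpose_apply, mul_comm, mul_comm (w.2 j), mul_assoc]
  have first_block := sum_sq_mul_mulVec_sq_le A w.1 hw.2 (w₁.2 - w₂.2)
  have second_block := sum_sq_mul_mulVec_sq_le Aᵀ w.2 hw.1 (w₁.1 - w₂.1)
  rw [frobenius_transpose] at second_block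
  rw [← Real.sqrt_mul (by positivity), add_comm (∑ i, (w₁.1 i - w₂.1 i) ^ 2 / _), mul_add]
  simp only [F₁_sub, F₂_sub, neg_sq]
  exact Real.sqrt_le_sqrt (add_le_add first_block second_block)

end

/-- The pseudo-gradient `F(μ,ν) = (Aν, 1 − Aᵀμ)` is `√K`-Lipschitz with respect to the
local norms `‖·‖_w` and `‖·‖_{⋆,w}` induced by the log-barrier, for every positive
`w ∈ W = Δ_A × Δ_B`. -/
theorem stmt_10 (m n : ℕ)
    (A : Matrix (Fin m) (Fin n) ℝ) (hA : ∀ i j, A i j ∈ Set.Icc (0 : ℝ) 1)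
    (F₁ : (Fin m → ℝ) × (Fin n → ℝ) → Fin m → ℝ)
    (F₂ : (Fin m → ℝ) × (Fin n → ℝ) → Fin n → ℝ)
    (hF₁ : ∀ w i, F₁ w i = ∑ j, A i j * w.2 j)
    (hF₂ : ∀ w j, F₂ w j = 1 - ∑ i, A i j * w.1 i)
    (w : (Fin m → ℝ) × (Fin n → ℝ))
    (hwW : w.1 ∈ stdSimplex ℝ (Fin m) ∧ w.2 ∈ stdSimplex ℝ (Fin n))
    (hwpos : (∀ i, 0 < w.1 i) ∧ (∀ j, 0 < w.2 j))
    (w₁ w₂ : (Fin m → ℝ) × (Fin n → ℝ))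
    (hw₁ : w₁.1 ∈ stdSimplex ℝ (Fin m) ∧ w₁.2 ∈ stdSimplex ℝ (Fin n))
    (hw₂ : w₂.1 ∈ stdSimplex ℝ (Fin m) ∧ w₂.2 ∈ stdSimplex ℝ (Fin n)) :
    Real.sqrt ((∑ i, (w.1 i) ^ 2 * (F₁ w₁ i - F₁ w₂ i) ^ 2) +
        ∑ j, (w.2 j) ^ 2 * (F₂ w₁ j - F₂ w₂ j) ^ 2)
      ≤ Real.sqrt (m + n) *
        Real.sqrt ((∑ i, (w₁.1 i - w₂.1 i) ^ 2 / (w.1 i) ^ 2) +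
          ∑ j, (w₁.2 j - w₂.2 j) ^ 2 / (w.2 j) ^ 2) := by
  have hA_abs (i : Fin m) (j : Fin n) : |A i j| ≤ 1 :=
    (abs_of_nonneg (hA i j).1).trans_le (hA i j).2
  have one_le_dim : (1 : ℝ) ≤ m + n := by
    have hm : 0 < m := Fin.pos_iff_nonempty.2 (nonempty_of_mem_stdSimplex hwW.1)
    exact_mod_cast hm.trans_le (Nat.le_add_right m n)
  refine (stmt_10_general A F₁ F₂ hF₁ hF₂ w
    ⟨fun i => (hwpos.1 i).ne', fun j => (hwpos.2 j).ne'⟩ w₁ w₂).trans ?_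
  gcongr
  exact (sum_sum_sq_mul_mul_le_one_of_mem_stdSimplex hA_abs hwW.1 hwW.2).trans one_le_dim
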